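/- Let z = (z₁, z₂) be a C² curve with z₁(α) − α and z₂(α) 2π-periodic, satisfying the arc-chord condition. Then for every α: PV ∫_{−π}^{π} [sinh(z₂(α) − z₂(β)) / (cosh(z₂(α) − z₂(β)) − cos(z₁(α) − z₁(β)))] ∂_β z₂(β) dβ = − PV ∫_{−π}^{π} [sin(z₁(α) − z₁(β)) / (cosh(z₂(α) − z₂(β)) − cos(z₁(α) − z₁(β)))] ∂_β z₁(β) dβ, where PV denotes the principal value lim_{ε→0⁺} of the integral restricted to {β : dist(α − β, 2πℤ) > ε}. -/

import Mathlib

open Real MeasureTheory Set Filter Topology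

noncomputable section

/-- Distance from `β` to `2πℤ`. -/
def distTZ (β : ℝ) : ℝ := |β - 2 * π * ((round (β / (2 * π)) : ℤ) : ℝ)|

/-- `z(α) - (α, 0)` is `2π`-periodic. -/
def PerCurve (z : ℝ → ℝ × ℝ) : Prop := ∀ α, z (α + 2 * π) = z α + (2 * π, 0)

/-- The denominator `cosh(z₂(α) - z₂(α-β)) - cos(z₁(α) - z₁(α-β))`. -/
def Qden (z : ℝ → ℝ × ℝ) (α β : ℝ) : ℝ :=
  Real.cosh ((z α).2 - (z (α - β)).2) - Real.cos ((z α).1 - (z (α - β)).1)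

/-- Arc-chord condition. -/
def ArcChord (z : ℝ → ℝ × ℝ) : Prop :=
  ∃ C > 0, ∀ α β : ℝ, distTZ β ^ 2 ≤ C * (2 * Qden z α β)

/-- The principal-value integration region: `β ∈ (-π, π]` with `α - β` at
distance more than `ε` from `2πℤ`. -/
def pvRegion (α ε : ℝ) : Set ℝ := {β : ℝ | β ∈ Ioc (-π) π ∧ ε < distTZ (α - β)}

/-!
Write `Q β = cosh (z₂(α) - z₂(β)) - cos (z₁(α) - z₁(β))`. The sum of the two integrands is
`-∂_β log Q`, and by periodicity its integral over `pvRegion α ε` reduces to the boundary term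
`log Q(α + ε) - log Q(α - ε)`. Since `Q β = 2 (sinh² ((z₂(α) - z₂(β)) / 2) +
sin² ((z₁(α) - z₁(β)) / 2))`, the arc-chord condition says that `Q` vanishes at `α` to exactly
second order: `Q β = (β - α)² D β` with `D` continuous and positive at `α`. The boundary term
therefore tends to `0`, so one principal value exists if and only if the other does, and they are
opposite. For a `C²` curve the `sinh` integrand is `(β - α)⁻¹ H β` with `H` differentiable at `α`,
so it is a multiple of `(β - α)⁻¹` plus a bounded remainder; the pole cancels between `α + t` and
`α - t`, and its principal value exists.
-/

section DSlope

variable {E : Type*} [NormedAddCommGroup E] [NormedSpace ℝ E]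

theorem hasDerivAt_dslope {u : ℝ → E} {a : ℝ} (hu : ∀ᶠ t in 𝓝 a, DifferentiableAt ℝ u t)
    (hu' : DifferentiableAt ℝ (deriv u) a) :
    HasDerivAt (dslope u a) ((2 : ℝ)⁻¹ • deriv (deriv u) a) a := by
  set c := deriv (deriv u) a
  set r : ℝ → E := fun t => u t - (t - a) • deriv u a - ((t - a) ^ 2 / 2) • c with hr
  obtain ⟨δ, hδ, hball⟩ := Metric.eventually_nhds_iff_ball.1 hu
  have hr' : ∀ t ∈ Metric.ball a δ,
      HasDerivWithinAt r (deriv u t - deriv u a - (t - a) • c) (Metric.ball a δ) t := by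
    intro t ht
    have hlin : HasDerivAt (fun t : ℝ => t - a) 1 t := (hasDerivAt_id t).sub_const a
    have hsq : HasDerivAt (fun t : ℝ => (t - a) ^ 2 / 2) (t - a) t := by
      simpa using (hlin.pow 2).div_const 2
    have hrt := ((hball t ht).hasDerivAt.sub (hlin.smul_const (deriv u a))).sub (hsq.smul_const c)
    rw [one_smul] at hrt
    exact hrt.hasDerivWithinAt
  have hr_littleO : (fun t => r t - r a) =o[𝓝 a] fun t => (t - a) ^ 2 := by
    rw [← Metric.isOpen_ball.nhdsWithin_eq (Metric.mem_ball_self hδ)]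
    refine (convex_ball a δ).isLittleO_pow_succ_real (Metric.mem_ball_self hδ) hr' ?_
    simpa using hu'.hasDerivAt.isLittleO.mono nhdsWithin_le_nhds
  refine .of_isLittleO (((Asymptotics.isBigO_refl (fun t : ℝ => (t - a)⁻¹) _).smul_isLittleO
    hr_littleO).congr (fun t => ?_) fun t => ?_)
  · rcases eq_or_ne t a with rfl | ht
    · simp
    · have hta : t - a ≠ 0 := sub_ne_zero.2 ht
      simp only [hr, dslope_of_ne _ ht, slope_def_module, dslope_same, sub_self]
      match_scalars <;> field_simp <;> ring
  · rcases eq_or_ne t a with rfl | ht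
    · simp
    · have hta : t - a ≠ 0 := sub_ne_zero.2 ht
      simp only [smul_eq_mul]
      field_simp

theorem differentiableAt_dslope_of_contDiffAt {u : ℝ → E} {a : ℝ} (hu : ContDiffAt ℝ 2 u a) :
    DifferentiableAt ℝ (dslope u a) a := by
  have hu' : ContDiffAt ℝ 1 (deriv u) a := hu.derivWithin (by norm_num)
  exact (hasDerivAt_dslope (hu.eventually (by simp) |>.mono fun t ht =>
    ht.differentiableAt (by simp)) (hu'.differentiableAt (by simp))).differentiableAt

end DSlope

section Distance

theorem distTZ_eq_norm (β : ℝ) : distTZ β = ‖(β : AddCircle (2 * π))‖ := by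
  rw [AddCircle.norm_eq, distTZ, inv_mul_eq_div, mul_comm (2 * π)]

theorem continuous_distTZ : Continuous distTZ := by
  rw [funext distTZ_eq_norm]
  exact (AddCircle.continuous_mk' _).norm

theorem periodic_distTZ : Function.Periodic distTZ (2 * π) := fun β => by
  simp only [distTZ_eq_norm, AddCircle.coe_add_period]

theorem distTZ_neg (β : ℝ) : distTZ (-β) = distTZ β := by
  simp only [distTZ_eq_norm, AddCircle.coe_neg, norm_neg]

theorem distTZ_eq_abs {β : ℝ} (hβ : |β| ≤ π) : distTZ β = |β| := by
  rw [distTZ_eq_norm, AddCircle.norm_coe_eq_abs_iff _ two_pi_pos.ne', abs_of_pos two_pi_pos]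
  linarith

theorem distTZ_pos_of_mem_Ioc {t : ℝ} (ht : t ∈ Ioc 0 π) : 0 < distTZ t := by
  rw [distTZ_eq_abs (by rw [abs_of_pos ht.1]; exact ht.2)]
  exact abs_pos.2 ht.1.ne'

theorem tendsto_const_add_nhdsGT_zero (a : ℝ) :
    Tendsto (fun t => a + t) (𝓝[>] 0) (𝓝[≠] a) :=
  tendsto_nhdsWithin_iff.2 ⟨(Continuous.tendsto' (by fun_prop) _ _ (add_zero a)).mono_left
    nhdsWithin_le_nhds, eventually_mem_nhdsWithin.mono fun t ht => by simpa using ht.ne'⟩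

theorem tendsto_const_sub_nhdsGT_zero (a : ℝ) :
    Tendsto (fun t => a - t) (𝓝[>] 0) (𝓝[≠] a) :=
  tendsto_nhdsWithin_iff.2 ⟨(Continuous.tendsto' (by fun_prop) _ _ (sub_zero a)).mono_left
    nhdsWithin_le_nhds, eventually_mem_nhdsWithin.mono fun t ht => by simpa using ht.ne'⟩

end Distance

section PrincipalValue

variable {E : Type*} [NormedAddCommGroup E] {f g : ℝ → E} {α : ℝ}

theorem integrableOn_pvRegion (hf : ContinuousOn f {β | distTZ (α - β) ≠ 0}) {ε : ℝ}
    (hε : 0 < ε) : IntegrableOn f (pvRegion α ε) := by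
  have hclosed : IsClosed {β | ε ≤ distTZ (α - β)} :=
    isClosed_le continuous_const (continuous_distTZ.comp (by fun_prop))
  have hcompact : IsCompact (Icc (-π) π ∩ {β | ε ≤ distTZ (α - β)}) :=
    isCompact_Icc.inter_right hclosed
  refine ((hf.mono ?_).integrableOn_compact hcompact).mono_set ?_
  · exact fun β hβ => (hε.trans_le hβ.2).ne'
  · exact fun β hβ => ⟨Ioc_subset_Icc_self hβ.1, hβ.2.le⟩

theorem continuousOn_add_sub_Ioc (hf : ContinuousOn f {β | distTZ (α - β) ≠ 0}) :
    ContinuousOn (fun t => f (α + t) + f (α - t)) (Ioc 0 π) := by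
  refine .add (hf.comp (by fun_prop) fun t ht => ?_) (hf.comp (by fun_prop) fun t ht => ?_)
  · simpa [distTZ_neg] using (distTZ_pos_of_mem_Ioc ht).ne'
  · simpa using (distTZ_pos_of_mem_Ioc ht).ne'

theorem integrableOn_Ioc_of_continuousOn_of_isBigO {a b : ℝ} (hf : ContinuousOn f (Ioc a b))
    (hO : f =O[𝓝[>] a] (1 : ℝ → ℝ)) : IntegrableOn f (Ioc a b) := by
  obtain ⟨C, hC⟩ := hO.bound
  obtain ⟨c, hac, hbound⟩ := mem_nhdsGT_iff_exists_Ioc_subset.1 hC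
  have hnear : IntegrableOn f (Ioc a b ∩ Ioc a c) := by
    refine IntegrableOn.of_bound (measure_mono inter_subset_left |>.trans_lt measure_Ioc_lt_top)
      ((hf.mono inter_subset_left).aestronglyMeasurable
        (measurableSet_Ioc.inter measurableSet_Ioc)) C ?_
    filter_upwards [ae_restrict_mem (measurableSet_Ioc.inter measurableSet_Ioc)] with t ht
    simpa using hbound ht.2
  have hfar : IntegrableOn f (Icc c b) :=
    (hf.mono fun t ht => ⟨hac.trans_le ht.1, ht.2⟩).integrableOn_Icc
  refine (hnear.union hfar).mono_set fun t ht => ?_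
  rcases le_total t c with htc | hct
  · exact .inl ⟨ht, ht.1, htc⟩
  · exact .inr ⟨hct, ht.2⟩

variable [NormedSpace ℝ E]

/-- The principal value over one period of `f`, singular at `α + 2πℤ`, exists and equals `L`. -/
def HasPrincipalValue (f : ℝ → E) (α : ℝ) (L : E) : Prop :=
  Tendsto (fun ε => ∫ β in pvRegion α ε, f β) (𝓝[>] 0) (𝓝 L)

theorem HasPrincipalValue.neg {L : E} (hf : HasPrincipalValue f α L) :
    HasPrincipalValue (-f) α (-L) :=
  (Tendsto.neg hf).congr fun _ => (integral_neg f).symm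

theorem HasPrincipalValue.add {L M : E} (hf : HasPrincipalValue f α L)
    (hg : HasPrincipalValue g α M) (hfi : ∀ ε > 0, IntegrableOn f (pvRegion α ε))
    (hgi : ∀ ε > 0, IntegrableOn g (pvRegion α ε)) : HasPrincipalValue (f + g) α (L + M) := by
  refine (Tendsto.add hf hg).congr' ?_
  filter_upwards [self_mem_nhdsWithin] with ε hε
  exact (integral_add (hfi ε hε) (hgi ε hε)).symm

theorem intervalIntegral_eq_integral_add_sub_of_periodic {T : ℝ} (hT : T ≠ 0)
    (hf : Function.Periodic f T) {a : ℝ} (hi : IntervalIntegrable f volume a (a + T)) (α : ℝ) :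
    ∫ x in a..a + T, f x = ∫ t in 0..T / 2, (f (α + t) + f (α - t)) := by
  have hint : ∀ b c, IntervalIntegrable f volume b c := hf.intervalIntegrable hT hi
  have hright : IntervalIntegrable (fun t => f (α + t)) volume 0 (T / 2) := by
    simpa using (hint α (α + T / 2)).comp_add_left α
  have hleft : IntervalIntegrable (fun t => f (α - t)) volume 0 (T / 2) := by
    simpa using (hint α (α - T / 2)).comp_sub_left α
  calc ∫ x in a..a + T, f x
      = ∫ x in (α - T / 2)..(α - T / 2) + T, f x := hf.intervalIntegral_add_eq _ _
    _ = (∫ x in α..α + T / 2, f x) + ∫ x in (α - T / 2)..α, f x := by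
      rw [add_comm (∫ x in α..α + T / 2, f x),
        intervalIntegral.integral_add_adjacent_intervals (hint _ _) (hint _ _)]
      congr 1
      ring
    _ = ∫ t in 0..T / 2, (f (α + t) + f (α - t)) := by
      rw [intervalIntegral.integral_add hright hleft, intervalIntegral.integral_comp_add_left,
        intervalIntegral.integral_comp_sub_left, add_zero, sub_zero]

theorem setIntegral_pvRegion (hf : Function.Periodic f (2 * π)) {ε : ℝ}
    (hi : IntegrableOn f (pvRegion α ε)) (hε : ε ∈ Ioo 0 π) :
    ∫ β in pvRegion α ε, f β = ∫ t in ε..π, (f (α + t) + f (α - t)) := by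
  set s := {β | ε < distTZ (α - β)}
  have hs : MeasurableSet s :=
    measurableSet_lt measurable_const (continuous_distTZ.comp (by fun_prop)).measurable
  have hπ : -π + 2 * π = π := by ring
  have hper : Function.Periodic (s.indicator f) (2 * π) := fun β => by
    simp only [s, indicator, mem_ofPred_eq, ← sub_sub, periodic_distTZ.sub_eq, hf β]
  have hgi : IntervalIntegrable (s.indicator f) volume (-π) (-π + 2 * π) := by
    rw [hπ, intervalIntegrable_iff_integrableOn_Ioc_of_le (by linarith [pi_pos])]
    exact (integrableOn_indicator_iff hs).2 (inter_comm (Ioc (-π) π) s ▸ hi)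
  have hsymm : ∀ t ∈ Ioc 0 π, s.indicator f (α + t) + s.indicator f (α - t) =
      (Ioi ε).indicator (fun t => f (α + t) + f (α - t)) t := by
    intro t ht
    have habs : distTZ t = t := by
      rw [distTZ_eq_abs (by rw [abs_of_pos ht.1]; exact ht.2), abs_of_pos ht.1]
    simp only [s, indicator, mem_ofPred_eq, sub_add_cancel_left, sub_sub_cancel, distTZ_neg, habs,
      mem_Ioi]
    split_ifs <;> simp
  calc ∫ β in pvRegion α ε, f β
      = ∫ β in (-π)..(-π + 2 * π), s.indicator f β := by
        rw [hπ, intervalIntegral.integral_of_le (by linarith [pi_pos]), setIntegral_indicator hs]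
        rfl
    _ = ∫ t in 0..π, (s.indicator f (α + t) + s.indicator f (α - t)) := by
      rw [intervalIntegral_eq_integral_add_sub_of_periodic two_pi_pos.ne' hper hgi α,
        mul_div_cancel_left₀ π two_ne_zero]
    _ = ∫ t in ε..π, (f (α + t) + f (α - t)) := by
      rw [intervalIntegral.integral_of_le pi_pos.le, setIntegral_congr_fun measurableSet_Ioc hsymm,
        setIntegral_indicator measurableSet_Ioi, intervalIntegral.integral_of_le hε.2.le,
        Ioc_inter_Ioi, sup_of_le_right hε.1.le]

theorem hasPrincipalValue_of_intervalIntegrable (hf : Function.Periodic f (2 * π))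
    (hfi : ∀ ε > 0, IntegrableOn f (pvRegion α ε))
    (hi : IntervalIntegrable (fun t => f (α + t) + f (α - t)) volume 0 π) :
    HasPrincipalValue f α (∫ t in 0..π, (f (α + t) + f (α - t))) := by
  have hcont : ContinuousWithinAt (fun ε => ∫ t in ε..π, (f (α + t) + f (α - t))) (Icc 0 π) 0 := by
    rw [← uIcc_of_le pi_pos.le]
    exact intervalIntegral.continuousOn_primitive_interval_left
      ((intervalIntegrable_iff' (by simp)).1 hi) 0 left_mem_uIcc
  refine (hcont.mono_of_mem_nhdsWithin (Icc_mem_nhdsGT pi_pos)).tendsto.congr' ?_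
  filter_upwards [Ioo_mem_nhdsGT pi_pos] with ε hε
  exact (setIntegral_pvRegion hf (hfi ε hε.1) hε).symm

theorem exists_hasPrincipalValue_of_isBigO (hf : Function.Periodic f (2 * π))
    (hcont : ContinuousOn f {β | distTZ (α - β) ≠ 0}) {c : E}
    (hO : (fun β => f β - (β - α)⁻¹ • c) =O[𝓝[≠] α] (1 : ℝ → ℝ)) :
    ∃ L, HasPrincipalValue f α L := by
  refine ⟨_, hasPrincipalValue_of_intervalIntegrable hf
    (fun ε hε => integrableOn_pvRegion hcont hε) ?_⟩
  rw [intervalIntegrable_iff_integrableOn_Ioc_of_le pi_pos.le]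
  refine integrableOn_Ioc_of_continuousOn_of_isBigO (continuousOn_add_sub_Ioc hcont) ?_
  have hr : (fun t => f (α + t) - t⁻¹ • c) =O[𝓝[>] 0] (1 : ℝ → ℝ) :=
    (hO.comp_tendsto (tendsto_const_add_nhdsGT_zero α)).congr_left fun t => by simp
  have hl : (fun t => f (α - t) + t⁻¹ • c) =O[𝓝[>] 0] (1 : ℝ → ℝ) :=
    (hO.comp_tendsto (tendsto_const_sub_nhdsGT_zero α)).congr_left fun t => by simp
  -- The poles `t⁻¹ • c` and `-(t⁻¹ • c)` cancel in the symmetrised integrand.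
  exact (hr.add hl).congr_left fun t => by abel

theorem exists_hasPrincipalValue_of_eventuallyEq_inv_smul (hf : Function.Periodic f (2 * π))
    (hcont : ContinuousOn f {β | distTZ (α - β) ≠ 0}) {h : ℝ → E}
    (hfh : f =ᶠ[𝓝[≠] α] fun β => (β - α)⁻¹ • h β) (hh : DifferentiableAt ℝ h α) :
    ∃ L, HasPrincipalValue f α L := by
  refine exists_hasPrincipalValue_of_isBigO hf hcont (c := h α) ?_
  have hO := (Asymptotics.isBigO_refl (fun β : ℝ => (β - α)⁻¹) (𝓝[≠] α)).smul
    (hh.isBigO_sub.mono nhdsWithin_le_nhds)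
  refine hO.congr' ?_ ?_
  · filter_upwards [hfh] with β hβ
    rw [hβ, smul_sub]
  · filter_upwards [self_mem_nhdsWithin] with β hβ
    exact inv_mul_cancel₀ (sub_ne_zero.2 hβ)

end PrincipalValue

section LogDeriv

variable {Q D : ℝ → ℝ} {α : ℝ}

theorem tendsto_log_sub_log_nhdsGT_zero {n : ℕ} (hQ : ∀ᶠ β in 𝓝[≠] α, Q β = (β - α) ^ n * D β)
    (hD : ContinuousAt D α) (hD0 : D α ≠ 0) :
    Tendsto (fun ε => log (Q (α - ε)) - log (Q (α + ε))) (𝓝[>] 0) (𝓝 0) := by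
  have hlog : ∀ᶠ β in 𝓝[≠] α, log (Q β) = n * log (β - α) + log (D β) := by
    filter_upwards [hQ, self_mem_nhdsWithin, (hD.eventually_ne hD0).filter_mono nhdsWithin_le_nhds]
      with β hβ hne hDβ
    rw [hβ, log_mul (pow_ne_zero n (sub_ne_zero.2 hne)) hDβ, log_pow]
  have hlogD : Tendsto (fun β => log (D β)) (𝓝[≠] α) (𝓝 (log (D α))) :=
    (hD.log hD0).tendsto.mono_left nhdsWithin_le_nhds
  have hadd := tendsto_const_add_nhdsGT_zero α
  have hsub := tendsto_const_sub_nhdsGT_zero α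
  have hlim := (hlogD.comp hsub).sub (hlogD.comp hadd)
  rw [sub_self] at hlim
  refine hlim.congr' ?_
  filter_upwards [hadd.eventually hlog, hsub.eventually hlog] with ε hadd hsub
  simp only [Function.comp_apply, hadd, hsub, add_sub_cancel_left, sub_sub_cancel_left,
    log_neg_eq_log]
  ring

theorem continuousOn_logDeriv (hQ : ContDiff ℝ 1 Q) : ContinuousOn (logDeriv Q) {β | Q β ≠ 0} :=
  hQ.continuous_deriv_one.continuousOn.div hQ.continuous.continuousOn fun _ hβ => hβ

theorem setIntegral_pvRegion_logDeriv (hper : Function.Periodic Q (2 * π)) (hQ : ContDiff ℝ 1 Q)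
    (hQ0 : ∀ β, distTZ (α - β) ≠ 0 → Q β ≠ 0) {ε : ℝ} (hε : ε ∈ Ioo 0 π) :
    ∫ β in pvRegion α ε, logDeriv Q β = log (Q (α - ε)) - log (Q (α + ε)) := by
  have hcont : ContinuousOn (logDeriv Q) {β | distTZ (α - β) ≠ 0} :=
    (continuousOn_logDeriv hQ).mono hQ0
  have hperiodic : Function.Periodic (logDeriv Q) (2 * π) := fun β => by
    simp only [logDeriv_apply, ← deriv_comp_add_const, hper.funext, hper β]
  have hlog : ∀ β, distTZ (α - β) ≠ 0 → HasDerivAt (fun β => log (Q β)) (logDeriv Q β) β :=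
    fun β hβ => ((hQ.differentiable (by simp)) β).hasDerivAt.log (hQ0 β hβ)
  have hderiv : ∀ t ∈ uIcc ε π, HasDerivAt (fun t => log (Q (α + t)) - log (Q (α - t)))
      (logDeriv Q (α + t) + logDeriv Q (α - t)) t := by
    intro t ht
    rw [uIcc_of_le hε.2.le] at ht
    have hdist := (distTZ_pos_of_mem_Ioc ⟨hε.1.trans_le ht.1, ht.2⟩).ne'
    rw [← sub_neg_eq_add]
    exact ((hlog (α + t) (by simpa [distTZ_neg] using hdist)).comp_const_add α t).sub
      ((hlog (α - t) (by simpa using hdist)).comp_const_sub α t)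
  have hint : IntervalIntegrable (fun t => logDeriv Q (α + t) + logDeriv Q (α - t)) volume ε π := by
    refine ((continuousOn_add_sub_Ioc hcont).mono fun t ht => ?_).intervalIntegrable
    rw [uIcc_of_le hε.2.le] at ht
    exact ⟨hε.1.trans_le ht.1, ht.2⟩
  have hends : Q (α + π) = Q (α - π) := by
    rw [← hper (α - π)]
    ring_nf
  rw [setIntegral_pvRegion hperiodic (integrableOn_pvRegion hcont hε.1) hε,
    intervalIntegral.integral_eq_sub_of_hasDerivAt hderiv hint, hends]
  ring

theorem hasPrincipalValue_logDeriv (hper : Function.Periodic Q (2 * π)) (hQ : ContDiff ℝ 1 Q)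
    (hQ0 : ∀ β, distTZ (α - β) ≠ 0 → Q β ≠ 0) {n : ℕ}
    (hQD : ∀ᶠ β in 𝓝[≠] α, Q β = (β - α) ^ n * D β) (hD : ContinuousAt D α) (hD0 : D α ≠ 0) :
    HasPrincipalValue (logDeriv Q) α 0 := by
  refine (tendsto_log_sub_log_nhdsGT_zero hQD hD hD0).congr' ?_
  filter_upwards [Ioo_mem_nhdsGT pi_pos] with ε hε
  exact (setIntegral_pvRegion_logDeriv hper hQ hQ0 hε).symm

end LogDeriv

section Chord

/-- The denominator `cosh (y α - y β) - cos (x α - x β)` of the integrands, for the chord joining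
the points of parameters `α` and `β` of the curve `(x, y)`. -/
def chordDen (x y : ℝ → ℝ) (α β : ℝ) : ℝ := cosh (y α - y β) - cos (x α - x β)

/-- `sinh` of half the vertical chord `y α - y β`. -/
def sinhHalf (y : ℝ → ℝ) (α β : ℝ) : ℝ := sinh ((y α - y β) / 2)

/-- `sin` of half the horizontal chord `x α - x β`. -/
def sinHalf (x : ℝ → ℝ) (α β : ℝ) : ℝ := sin ((x α - x β) / 2)

/-- The quotient `chordDen x y α β / (β - α) ^ 2`, extended to `β = α` by its limit. -/
def chordDenQuot (x y : ℝ → ℝ) (α β : ℝ) : ℝ :=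
  2 * (dslope (sinhHalf y α) α β ^ 2 + dslope (sinHalf x α) α β ^ 2)

/-- The arc-chord condition for the curve `(x, y)` at the single parameter `α`. -/
def ArcChordAt (x y : ℝ → ℝ) (α : ℝ) : Prop :=
  ∃ C > 0, ∀ β, distTZ (α - β) ^ 2 ≤ C * chordDen x y α β

/-- The integrand of the normal-component integral. -/
def sinhIntegrand (x y : ℝ → ℝ) (α β : ℝ) : ℝ :=
  sinh (y α - y β) / chordDen x y α β * deriv y β

/-- The integrand of the tangential integral. -/
def sinIntegrand (x y : ℝ → ℝ) (α β : ℝ) : ℝ :=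
  sin (x α - x β) / chordDen x y α β * deriv x β

variable {x y : ℝ → ℝ} {α β : ℝ} {k : ℤ}

theorem chordDen_eq_sinhHalf_sinHalf (x y : ℝ → ℝ) (α β : ℝ) :
    chordDen x y α β = 2 * (sinhHalf y α β ^ 2 + sinHalf x α β ^ 2) := by
  have hcosh := cosh_two_mul ((y α - y β) / 2)
  have hcos := cos_two_mul ((x α - x β) / 2)
  rw [mul_div_cancel₀ _ two_ne_zero] at hcosh hcos
  rw [chordDen, sinhHalf, sinHalf, hcosh, hcos, cosh_sq, sin_sq]
  ring

theorem sub_mul_dslope_sinhHalf (y : ℝ → ℝ) (α β : ℝ) :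
    (β - α) * dslope (sinhHalf y α) α β = sinhHalf y α β := by
  simpa [sinhHalf] using sub_smul_dslope (sinhHalf y α) α β

theorem sub_mul_dslope_sinHalf (x : ℝ → ℝ) (α β : ℝ) :
    (β - α) * dslope (sinHalf x α) α β = sinHalf x α β := by
  simpa [sinHalf] using sub_smul_dslope (sinHalf x α) α β

theorem chordDen_eq_sq_mul_chordDenQuot (x y : ℝ → ℝ) (α β : ℝ) :
    chordDen x y α β = (β - α) ^ 2 * chordDenQuot x y α β := by
  rw [chordDen_eq_sinhHalf_sinHalf, chordDenQuot, ← sub_mul_dslope_sinhHalf,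
    ← sub_mul_dslope_sinHalf]
  ring

theorem differentiableAt_dslope_sinhHalf (hy : ContDiffAt ℝ 2 y α) :
    DifferentiableAt ℝ (dslope (sinhHalf y α) α) α :=
  differentiableAt_dslope_of_contDiffAt ((contDiffAt_const.sub hy).div_const 2).sinh

theorem differentiableAt_dslope_sinHalf (hx : ContDiffAt ℝ 2 x α) :
    DifferentiableAt ℝ (dslope (sinHalf x α) α) α :=
  differentiableAt_dslope_of_contDiffAt ((contDiffAt_const.sub hx).div_const 2).sin

theorem differentiableAt_chordDenQuot (hx : ContDiffAt ℝ 2 x α) (hy : ContDiffAt ℝ 2 y α) :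
    DifferentiableAt ℝ (chordDenQuot x y α) α :=
  (((differentiableAt_dslope_sinhHalf hy).pow 2).add
    ((differentiableAt_dslope_sinHalf hx).pow 2)).const_mul 2

theorem ArcChordAt.chordDen_pos (h : ArcChordAt x y α) (hβ : distTZ (α - β) ≠ 0) :
    0 < chordDen x y α β := by
  obtain ⟨C, hC, hle⟩ := h
  exact pos_of_mul_pos_right ((pow_pos (hβ.lt_of_le' (abs_nonneg _)) 2).trans_le (hle β)) hC.le

theorem ArcChordAt.chordDenQuot_self_pos (h : ArcChordAt x y α)
    (hcont : ContinuousAt (chordDenQuot x y α) α) : 0 < chordDenQuot x y α α := by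
  obtain ⟨C, hC, hle⟩ := h
  have hlim : Tendsto (chordDenQuot x y α) (𝓝[≠] α) (𝓝 (chordDenQuot x y α α)) :=
    hcont.tendsto.mono_left nhdsWithin_le_nhds
  refine (inv_pos.2 hC).trans_le (ge_of_tendsto hlim ?_)
  filter_upwards [self_mem_nhdsWithin, nhdsWithin_le_nhds (Metric.ball_mem_nhds α pi_pos)]
    with β hne hball
  have hdist : distTZ (α - β) ^ 2 = (β - α) ^ 2 := by
    rw [distTZ_eq_abs (by rw [abs_sub_comm]; exact (Metric.mem_ball.1 hball).le), sq_abs]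
    ring
  have hsq : 0 < (β - α) ^ 2 := sq_pos_of_ne_zero (sub_ne_zero.2 hne)
  have hbound := hle β
  rw [hdist, chordDen_eq_sq_mul_chordDenQuot, mul_left_comm] at hbound
  exact (inv_le_iff_one_le_mul₀' hC).2 (le_of_mul_le_mul_left (by simpa using hbound) hsq)

theorem contDiff_chordDen (hx : ContDiff ℝ 1 x) (hy : ContDiff ℝ 1 y) :
    ContDiff ℝ 1 (chordDen x y α) :=
  (contDiff_const.sub hy).cosh.sub (contDiff_const.sub hx).cos

theorem logDeriv_chordDen (hx : Differentiable ℝ x) (hy : Differentiable ℝ y) :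
    logDeriv (chordDen x y α) = -(sinhIntegrand x y α + sinIntegrand x y α) := by
  ext β
  have hderiv : HasDerivAt (chordDen x y α)
      (sinh (y α - y β) * -deriv y β - -sin (x α - x β) * -deriv x β) β :=
    ((hy β).hasDerivAt.const_sub (y α)).cosh.sub ((hx β).hasDerivAt.const_sub (x α)).cos
  simp only [logDeriv_apply, hderiv.deriv, Pi.neg_apply, Pi.add_apply, sinhIntegrand, sinIntegrand]
  ring

theorem periodic_chordDen (hx : ∀ β, x (β + 2 * π) = x β + k * (2 * π))
    (hy : Function.Periodic y (2 * π)) : Function.Periodic (chordDen x y α) (2 * π) := fun β => by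
  rw [chordDen, hx, hy, ← sub_sub, cos_sub_int_mul_two_pi, chordDen]

theorem periodic_sinhIntegrand (hx : ∀ β, x (β + 2 * π) = x β + k * (2 * π))
    (hy : Function.Periodic y (2 * π)) :
    Function.Periodic (sinhIntegrand x y α) (2 * π) := fun β => by
  rw [sinhIntegrand, periodic_chordDen hx hy, hy, ← deriv_comp_add_const, hy.funext, sinhIntegrand]

theorem continuousOn_sinhIntegrand (hx : Continuous x) (hy : ContDiff ℝ 1 y) :
    ContinuousOn (sinhIntegrand x y α) {β | chordDen x y α β ≠ 0} := by
  have hy' := hy.continuous_deriv_one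
  have hyc := hy.continuous
  refine .mul (.div ?_ ?_ fun _ hβ => hβ) hy'.continuousOn <;> unfold chordDen <;> fun_prop

theorem sinhIntegrand_eventuallyEq_inv_smul (x y : ℝ → ℝ) (α : ℝ) :
    sinhIntegrand x y α =ᶠ[𝓝[≠] α] fun β => (β - α)⁻¹ • (2 * dslope (sinhHalf y α) α β *
      cosh ((y α - y β) / 2) / chordDenQuot x y α β * deriv y β) := by
  filter_upwards [self_mem_nhdsWithin] with β hβ
  have hne : β - α ≠ 0 := sub_ne_zero.2 hβ
  have hsinh := sinh_two_mul ((y α - y β) / 2)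
  rw [mul_div_cancel₀ _ two_ne_zero, ← sinhHalf, ← sub_mul_dslope_sinhHalf] at hsinh
  rw [sinhIntegrand, hsinh, chordDen_eq_sq_mul_chordDenQuot, smul_eq_mul]
  field_simp

theorem hasPrincipalValue_logDeriv_chordDen (hx : ContDiff ℝ 1 x) (hy : ContDiff ℝ 1 y)
    (hxα : ContDiffAt ℝ 2 x α) (hyα : ContDiffAt ℝ 2 y α)
    (hxper : ∀ β, x (β + 2 * π) = x β + k * (2 * π)) (hyper : Function.Periodic y (2 * π))
    (hac : ArcChordAt x y α) : HasPrincipalValue (logDeriv (chordDen x y α)) α 0 :=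
  have hquot : ContinuousAt (chordDenQuot x y α) α :=
    (differentiableAt_chordDenQuot hxα hyα).continuousAt
  hasPrincipalValue_logDeriv (periodic_chordDen hxper hyper) (contDiff_chordDen hx hy)
    (fun _ hβ => (hac.chordDen_pos hβ).ne')
    (.of_forall fun β => chordDen_eq_sq_mul_chordDenQuot x y α β) hquot
    (hac.chordDenQuot_self_pos hquot).ne'

theorem exists_hasPrincipalValue_sinhIntegrand (hx : Continuous x) (hy : ContDiff ℝ 1 y)
    (hxα : ContDiffAt ℝ 2 x α) (hyα : ContDiffAt ℝ 2 y α)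
    (hxper : ∀ β, x (β + 2 * π) = x β + k * (2 * π)) (hyper : Function.Periodic y (2 * π))
    (hac : ArcChordAt x y α) : ∃ L, HasPrincipalValue (sinhIntegrand x y α) α L := by
  have hquot := differentiableAt_chordDenQuot hxα hyα
  have hderiv : ContDiffAt ℝ 1 (deriv y) α := hyα.derivWithin (by norm_num)
  refine exists_hasPrincipalValue_of_eventuallyEq_inv_smul (periodic_sinhIntegrand hxper hyper)
    ((continuousOn_sinhIntegrand hx hy).mono fun _ hβ => (hac.chordDen_pos hβ).ne')
    (sinhIntegrand_eventuallyEq_inv_smul x y α) ?_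
  have hcosh : DifferentiableAt ℝ (fun β => cosh ((y α - y β) / 2)) α :=
    (((hyα.differentiableAt (by simp)).const_sub _).div_const _).cosh
  exact ((((differentiableAt_dslope_sinhHalf hyα).const_mul 2).mul hcosh).div hquot
    (hac.chordDenQuot_self_pos hquot.continuousAt).ne').mul (hderiv.differentiableAt (by simp))

theorem pv_tangential_identity_general (hx : ContDiff ℝ 1 x) (hy : ContDiff ℝ 1 y)
    (hxα : ContDiffAt ℝ 2 x α) (hyα : ContDiffAt ℝ 2 y α)
    (hxper : ∀ β, x (β + 2 * π) = x β + k * (2 * π)) (hyper : Function.Periodic y (2 * π))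
    (hac : ArcChordAt x y α) :
    ∃ L, HasPrincipalValue (sinhIntegrand x y α) α L ∧
      HasPrincipalValue (sinIntegrand x y α) α (-L) := by
  obtain ⟨L, hsinh⟩ :=
    exists_hasPrincipalValue_sinhIntegrand hx.continuous hy hxα hyα hxper hyper hac
  have hlog := hasPrincipalValue_logDeriv_chordDen hx hy hxα hyα hxper hyper hac
  have hden : {β | distTZ (α - β) ≠ 0} ⊆ {β | chordDen x y α β ≠ 0} :=
    fun _ hβ => (hac.chordDen_pos hβ).ne'
  have hlogcont := (continuousOn_logDeriv (contDiff_chordDen hx hy)).mono hden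
  have hsinhcont := (continuousOn_sinhIntegrand hx.continuous hy).mono hden
  have hsum := hlog.add hsinh (fun _ => integrableOn_pvRegion hlogcont)
    fun _ => integrableOn_pvRegion hsinhcont
  have hsin : sinIntegrand x y α = -(logDeriv (chordDen x y α) + sinhIntegrand x y α) := by
    rw [logDeriv_chordDen (hx.differentiable (by simp)) (hy.differentiable (by simp))]
    abel
  refine ⟨L, hsinh, ?_⟩
  rw [hsin, ← zero_add L]
  exact hsum.neg

end Chord

section Curve

variable {z : ℝ → ℝ × ℝ}

theorem PerCurve.fst_add_two_pi (hz : PerCurve z) (β : ℝ) :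
    (z (β + 2 * π)).1 = (z β).1 + (1 : ℤ) * (2 * π) := by
  rw [hz, Prod.fst_add, Int.cast_one, one_mul]

theorem PerCurve.periodic_snd (hz : PerCurve z) :
    Function.Periodic (fun β => (z β).2) (2 * π) := fun β => by
  simp only [hz β, Prod.snd_add, add_zero]

theorem ArcChord.arcChordAt (hz : ArcChord z) (α : ℝ) :
    ArcChordAt (fun β => (z β).1) (fun β => (z β).2) α := by
  obtain ⟨C, hC, hle⟩ := hz
  refine ⟨C * 2, mul_pos hC two_pos, fun β => ?_⟩
  simpa only [Qden, sub_sub_cancel, mul_assoc, chordDen] using hle α (α - β)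

end Curve

/-- The principal-value identity converting the normal-component Birkhoff–Rott
integral into a tangential one: both principal values exist and
`PV ∫ sinh(Δz₂)/(cosh Δz₂ - cos Δz₁) ∂_β z₂ dβ = - PV ∫ sin(Δz₁)/(cosh Δz₂ - cos Δz₁) ∂_β z₁ dβ`. -/
theorem pv_tangential_identity (z : ℝ → ℝ × ℝ)
    (hsm : ContDiff ℝ 2 z) (hper : PerCurve z) (hac : ArcChord z) (α : ℝ) :
    ∃ L : ℝ,
      Tendsto (fun ε : ℝ => ∫ β in pvRegion α ε,
          Real.sinh ((z α).2 - (z β).2)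
            / (Real.cosh ((z α).2 - (z β).2) - Real.cos ((z α).1 - (z β).1))
            * deriv (fun a => (z a).2) β)
        (𝓝[>] (0 : ℝ)) (𝓝 L) ∧
      Tendsto (fun ε : ℝ => ∫ β in pvRegion α ε,
          Real.sin ((z α).1 - (z β).1)
            / (Real.cosh ((z α).2 - (z β).2) - Real.cos ((z α).1 - (z β).1))
            * deriv (fun a => (z a).1) β)
        (𝓝[>] (0 : ℝ)) (𝓝 (-L)) := by
  have hz1 : ContDiff ℝ 2 fun a => (z a).1 := hsm.fst
  have hz2 : ContDiff ℝ 2 fun a => (z a).2 := hsm.snd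
  simpa only [HasPrincipalValue, sinhIntegrand, sinIntegrand, chordDen] using
    pv_tangential_identity_general (hz1.of_le one_le_two) (hz2.of_le one_le_two)
      hz1.contDiffAt hz2.contDiffAt hper.fst_add_two_pi hper.periodic_snd (hac.arcChordAt α)
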